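/- Let (H, V, ε, α) be a crossed module: H and V are groups, ε: V → H and α: H → Aut(V) are group homomorphisms satisfying ε(α(h)(v)) = h ε(v) h⁻¹ and α(ε(v))(v') = v v' v⁻¹ for all h ∈ H and v, v' ∈ V. For n ≥ 0, let N_n be the set of tuples ((h_{ij})_{0 ≤ i ≤ j ≤ n}, (v_{ijk})_{0 ≤ i ≤ j ≤ k ≤ n}) with h_{ij} ∈ H, v_{ijk} ∈ V, satisfying: (1) h_{ii} = e for all i, and v_{iij} = v_{ijj} = e for all i ≤ j; (2) h_{ik} = ε(v_{ijk}) h_{ij} h_{jk} for all i ≤ j ≤ k; (3) v_{ikℓ} v_{ijk} = v_{ijℓ} · α(h_{ij})(v_{jkℓ}) for all i ≤ j ≤ k ≤ ℓ. Then the map N_n → H^n × V^{n(n−1)/2} sending a tuple to ((h_{0i})_{1 ≤ i ≤ n}, (v_{0ij})_{1 ≤ i < j ≤ n}) is a bijection. -/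

import Mathlib

/-- The conditions defining an `n`-simplex of the nerve of a crossed module `(H, V, ε, α)`:
a tuple of `h_{ij} ∈ H` (for `0 ≤ i ≤ j ≤ n`) and `v_{ijk} ∈ V` (for `0 ≤ i ≤ j ≤ k ≤ n`)
satisfying (1) `h_{ii} = e`, `v_{iij} = v_{ijj} = e`; (2) `h_{ik} = ε(v_{ijk}) h_{ij} h_{jk}`;
(3) `v_{ikl} v_{ijk} = v_{ijl} α(h_{ij})(v_{jkl})`. -/
def IsNerveSimplex {H V : Type*} [Group H] [Group V]
    (ε : V →* H) (α : H →* MulAut V) (n : ℕ)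
    (q : ({ij : Fin (n + 1) × Fin (n + 1) // ij.1 ≤ ij.2} → H)
        × ({t : Fin (n + 1) × Fin (n + 1) × Fin (n + 1) //
              t.1 ≤ t.2.1 ∧ t.2.1 ≤ t.2.2} → V)) : Prop :=
  (∀ i : Fin (n + 1), q.1 ⟨(i, i), le_refl i⟩ = 1)
  ∧ (∀ (i j : Fin (n + 1)) (hij : i ≤ j),
      q.2 ⟨(i, i, j), ⟨le_refl i, hij⟩⟩ = 1 ∧ q.2 ⟨(i, j, j), ⟨hij, le_refl j⟩⟩ = 1)
  ∧ (∀ (i j k : Fin (n + 1)) (hij : i ≤ j) (hjk : j ≤ k),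
      q.1 ⟨(i, k), le_trans hij hjk⟩
        = ε (q.2 ⟨(i, j, k), ⟨hij, hjk⟩⟩) * q.1 ⟨(i, j), hij⟩ * q.1 ⟨(j, k), hjk⟩)
  ∧ (∀ (i j k l : Fin (n + 1)) (hij : i ≤ j) (hjk : j ≤ k) (hkl : k ≤ l),
      q.2 ⟨(i, k, l), ⟨le_trans hij hjk, hkl⟩⟩ * q.2 ⟨(i, j, k), ⟨hij, hjk⟩⟩
        = q.2 ⟨(i, j, l), ⟨hij, le_trans hjk hkl⟩⟩
          * α (q.1 ⟨(i, j), hij⟩) (q.2 ⟨(j, k, l), ⟨hjk, hkl⟩⟩))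

/-!
In an `n`-simplex, condition (2) for `0 ≤ i ≤ j` solves for `h_{ij}` and condition (3) for
`0 ≤ i ≤ j ≤ k` solves for `v_{ijk}` in terms of the `h_{0i}` and `v_{0ij}`, which gives
injectivity. Conversely, the elements of `H` and `V` given by these formulas satisfy (1), (2) and
(3) as soon as `v_{0ii} = e` for all `i`: equivariance of `ε` yields (2), and (3) holds because, by
the Peiffer identity, `α(h_{0i} h_{ij} h_{0j}⁻¹)` is conjugation by `v_{0ij}⁻¹`.
-/

section Cone

variable {H V : Type*} [Group H] [Group V] (ε : V →* H) (α : H →* MulAut V)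

/-- The edge `h_{ij}` determined by the cone data `a = h_{0i}`, `b = h_{0j}`, `v = v_{0ij}`: the
solution of condition (2) for `0 ≤ i ≤ j`. -/
def coneEdge (a b : H) (v : V) : H :=
  a⁻¹ * (ε v)⁻¹ * b

/-- The face `v_{ijk}` determined by the cone data `a = h_{0i}`, `vij = v_{0ij}`, `vjk = v_{0jk}`,
`vik = v_{0ik}`: the solution of condition (3) for `0 ≤ i ≤ j ≤ k`. -/
def coneFace (a : H) (vij vjk vik : V) : V :=
  (α a)⁻¹ (vik⁻¹ * vjk * vij)

theorem eq_coneEdge_iff {a b x : H} {v : V} : x = coneEdge ε a b v ↔ b = ε v * a * x := by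
  rw [coneEdge, ← mul_inv_rev, eq_inv_mul_iff_mul_eq, eq_comm]

theorem eq_coneFace_iff {a : H} {vij vjk vik x : V} :
    x = coneFace α a vij vjk vik ↔ vjk * vij = vik * α a x := by
  rw [coneFace, MulAut.inv_apply, MulEquiv.eq_symm_apply, mul_assoc, eq_inv_mul_iff_mul_eq, eq_comm]

theorem coneEdge_self_one (a : H) : coneEdge ε a a 1 = 1 := by
  simp [coneEdge]

theorem coneFace_one_left (a : H) (v : V) : coneFace α a 1 v v = 1 := by
  simp [coneFace]

theorem coneFace_one_right (a : H) (v : V) : coneFace α a v 1 v = 1 := by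
  simp [coneFace]

theorem coneEdge_one_one (b : H) : coneEdge ε 1 b 1 = b := by
  simp [coneEdge]

theorem coneFace_one_one (v w : V) : coneFace α 1 1 v w = w⁻¹ * v := by
  simp [coneFace]

variable {ε α}

theorem map_coneFace (hεα : ∀ (h : H) (v : V), ε (α h v) = h * ε v * h⁻¹)
    (a : H) (vij vjk vik : V) :
    ε (coneFace α a vij vjk vik) = a⁻¹ * ((ε vik)⁻¹ * ε vjk * ε vij) * a := by
  rw [coneFace, ← map_inv, hεα, inv_inv, map_mul, map_mul, map_inv]

theorem coneEdge_eq_map_coneFace_mul (hεα : ∀ (h : H) (v : V), ε (α h v) = h * ε v * h⁻¹)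
    (a b c : H) (vij vjk vik : V) :
    coneEdge ε a c vik
      = ε (coneFace α a vij vjk vik) * coneEdge ε a b vij * coneEdge ε b c vjk := by
  rw [map_coneFace hεα, coneEdge, coneEdge, coneEdge]
  group

theorem apply_apply_coneEdge (hαε : ∀ v v' : V, α (ε v) v' = v * v' * v⁻¹)
    (a b : H) (v x : V) :
    α a (α (coneEdge ε a b v) x) = v⁻¹ * α b x * v := by
  calc α a (α (coneEdge ε a b v) x)
      = α (a * coneEdge ε a b v) x := by rw [map_mul, MulAut.mul_apply]
    _ = α (ε v⁻¹ * b) x := by rw [coneEdge, map_inv, mul_assoc, mul_inv_cancel_left]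
    _ = v⁻¹ * α b x * v := by rw [map_mul, MulAut.mul_apply, hαε, inv_inv]

theorem coneFace_cocycle (hαε : ∀ v v' : V, α (ε v) v' = v * v' * v⁻¹)
    (a b : H) (vij vik vil vjk vjl vkl : V) :
    coneFace α a vik vkl vil * coneFace α a vij vjk vik
      = coneFace α a vij vjl vil * α (coneEdge ε a b vij) (coneFace α b vjk vkl vjl) := by
  apply (α a).injective
  rw [map_mul, map_mul, apply_apply_coneEdge hαε]
  simp only [coneFace, MulAut.apply_inv_self]
  group

end Cone

section Simplex

variable {H V : Type*} [Group H] [Group V] {ε : V →* H} {α : H →* MulAut V} {n : ℕ}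

namespace IsNerveSimplex

variable {q q' : ({ij : Fin (n + 1) × Fin (n + 1) // ij.1 ≤ ij.2} → H)
    × ({t : Fin (n + 1) × Fin (n + 1) × Fin (n + 1) // t.1 ≤ t.2.1 ∧ t.2.1 ≤ t.2.2} → V)}

theorem edge_eq_coneEdge (hq : IsNerveSimplex ε α n q) {i j : Fin (n + 1)} (hij : i ≤ j) :
    q.1 ⟨(i, j), hij⟩ = coneEdge ε (q.1 ⟨(0, i), Fin.zero_le _⟩) (q.1 ⟨(0, j), Fin.zero_le _⟩)
      (q.2 ⟨(0, i, j), Fin.zero_le _, hij⟩) :=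
  (eq_coneEdge_iff ε).mpr (hq.2.2.1 0 i j (Fin.zero_le _) hij)

theorem face_eq_coneFace (hq : IsNerveSimplex ε α n q) {i j k : Fin (n + 1)}
    (hij : i ≤ j) (hjk : j ≤ k) :
    q.2 ⟨(i, j, k), hij, hjk⟩ = coneFace α (q.1 ⟨(0, i), Fin.zero_le _⟩)
      (q.2 ⟨(0, i, j), Fin.zero_le _, hij⟩) (q.2 ⟨(0, j, k), Fin.zero_le _, hjk⟩)
      (q.2 ⟨(0, i, k), Fin.zero_le _, hij.trans hjk⟩) :=
  (eq_coneFace_iff α).mpr (hq.2.2.2 0 i j k (Fin.zero_le _) hij hjk)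

theorem edge_zero_congr (hq : IsNerveSimplex ε α n q) (hq' : IsNerveSimplex ε α n q')
    (h : ∀ i : Fin n, q.1 ⟨(0, i.succ), Fin.zero_le _⟩ = q'.1 ⟨(0, i.succ), Fin.zero_le _⟩)
    (i : Fin (n + 1)) :
    q.1 ⟨(0, i), Fin.zero_le _⟩ = q'.1 ⟨(0, i), Fin.zero_le _⟩ := by
  cases i using Fin.cases with
  | zero => exact (hq.1 0).trans (hq'.1 0).symm
  | succ i => exact h i

theorem face_zero_congr (hq : IsNerveSimplex ε α n q) (hq' : IsNerveSimplex ε α n q')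
    (h : ∀ (i j : Fin n) (hij : i < j),
      q.2 ⟨(0, i.succ, j.succ), Fin.zero_le _, Fin.succ_le_succ_iff.mpr hij.le⟩
        = q'.2 ⟨(0, i.succ, j.succ), Fin.zero_le _, Fin.succ_le_succ_iff.mpr hij.le⟩)
    {i j : Fin (n + 1)} (hij : i ≤ j) :
    q.2 ⟨(0, i, j), Fin.zero_le _, hij⟩ = q'.2 ⟨(0, i, j), Fin.zero_le _, hij⟩ := by
  rcases hij.eq_or_lt with rfl | hlt
  · exact (hq.2.1 0 i (Fin.zero_le _)).2.trans (hq'.2.1 0 i (Fin.zero_le _)).2.symm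
  cases i using Fin.cases with
  | zero => exact (hq.2.1 0 j hij).1.trans (hq'.2.1 0 j hij).1.symm
  | succ i =>
    cases j using Fin.cases with
    | zero => exact absurd hlt (Fin.not_lt_zero _)
    | succ j => exact h i j (Fin.succ_lt_succ_iff.mp hlt)

theorem ext_zero (hq : IsNerveSimplex ε α n q) (hq' : IsNerveSimplex ε α n q')
    (hedge : ∀ i : Fin n,
      q.1 ⟨(0, i.succ), Fin.zero_le _⟩ = q'.1 ⟨(0, i.succ), Fin.zero_le _⟩)
    (hface : ∀ (i j : Fin n) (hij : i < j),
      q.2 ⟨(0, i.succ, j.succ), Fin.zero_le _, Fin.succ_le_succ_iff.mpr hij.le⟩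
        = q'.2 ⟨(0, i.succ, j.succ), Fin.zero_le _, Fin.succ_le_succ_iff.mpr hij.le⟩) :
    q = q' := by
  have edge_zero := edge_zero_congr hq hq' hedge
  have face_zero {i j : Fin (n + 1)} (hij : i ≤ j) := face_zero_congr hq hq' hface hij
  refine Prod.ext (funext fun ⟨_, hij⟩ => ?_) (funext fun ⟨_, hij, hjk⟩ => ?_)
  · rw [hq.edge_eq_coneEdge hij, hq'.edge_eq_coneEdge hij, edge_zero, edge_zero, face_zero hij]
  · rw [hq.face_eq_coneFace hij hjk, hq'.face_eq_coneFace hij hjk, edge_zero, face_zero hij,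
      face_zero hjk, face_zero (hij.trans hjk)]

end IsNerveSimplex

/-- The tuple of edges and faces determined by cone data `a i = h_{0i}` and `w i j = v_{0ij}`. The
values `w i j` with `j < i` are junk. -/
def coneSimplex (ε : V →* H) (α : H →* MulAut V) (a : Fin (n + 1) → H)
    (w : Fin (n + 1) → Fin (n + 1) → V) :
    ({ij : Fin (n + 1) × Fin (n + 1) // ij.1 ≤ ij.2} → H)
      × ({t : Fin (n + 1) × Fin (n + 1) × Fin (n + 1) // t.1 ≤ t.2.1 ∧ t.2.1 ≤ t.2.2} → V) :=
  (fun ⟨(i, j), _⟩ => coneEdge ε (a i) (a j) (w i j),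
    fun ⟨(i, j, k), _⟩ => coneFace α (a i) (w i j) (w j k) (w i k))

theorem isNerveSimplex_coneSimplex (hεα : ∀ (h : H) (v : V), ε (α h v) = h * ε v * h⁻¹)
    (hαε : ∀ v v' : V, α (ε v) v' = v * v' * v⁻¹)
    (a : Fin (n + 1) → H) {w : Fin (n + 1) → Fin (n + 1) → V} (hw : ∀ i, w i i = 1) :
    IsNerveSimplex ε α n (coneSimplex ε α a w) := by
  refine ⟨fun i => ?_, fun i j _ => ⟨?_, ?_⟩, fun i j k _ _ => ?_, fun i j k l _ _ _ => ?_⟩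
  · simp only [coneSimplex, hw, coneEdge_self_one]
  · simp only [coneSimplex, hw, coneFace_one_left]
  · simp only [coneSimplex, hw, coneFace_one_right]
  · exact coneEdge_eq_map_coneFace_mul hεα ..
  · exact coneFace_cocycle hαε ..

theorem coneSimplex_edge_zero {a : Fin (n + 1) → H} {w : Fin (n + 1) → Fin (n + 1) → V}
    (ha : a 0 = 1) (hw : ∀ i, w 0 i = 1) (i : Fin (n + 1)) :
    (coneSimplex ε α a w).1 ⟨(0, i), Fin.zero_le _⟩ = a i := by
  simp only [coneSimplex, ha, hw, coneEdge_one_one]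

theorem coneSimplex_face_zero {a : Fin (n + 1) → H} {w : Fin (n + 1) → Fin (n + 1) → V}
    (ha : a 0 = 1) (hw : ∀ i, w 0 i = 1) {i j : Fin (n + 1)} (hij : i ≤ j) :
    (coneSimplex ε α a w).2 ⟨(0, i, j), Fin.zero_le _, hij⟩ = w i j := by
  simp only [coneSimplex, ha, hw, coneFace_one_one, inv_one, one_mul]

end Simplex

section ConeFaces

variable {M : Type*} [One M] {n : ℕ}

/-- The extension of a family `(v_{0ij})_{1 ≤ i < j ≤ n}` to all `i` and `j` in `{0, …, n}` by `1`:
the value prescribed by condition (1) when `i = 0` or `i = j`, and a junk value when `j < i`. The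
index set `Fin n` stands for `{1, …, n}`, so `v_{0ij}` is `g ⟨(i - 1, j - 1), _⟩`. -/
def extendFaces (g : {st : Fin n × Fin n // st.1 < st.2} → M) : Fin (n + 1) → Fin (n + 1) → M :=
  Fin.cons 1 fun i => Fin.cons 1 fun j => if hij : i < j then g ⟨(i, j), hij⟩ else 1

variable (g : {st : Fin n × Fin n // st.1 < st.2} → M)

theorem extendFaces_zero (j : Fin (n + 1)) : extendFaces g 0 j = 1 := rfl

theorem extendFaces_self (i : Fin (n + 1)) : extendFaces g i i = 1 := by
  cases i using Fin.cases <;> simp [extendFaces]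

theorem extendFaces_succ_succ {i j : Fin n} (hij : i < j) :
    extendFaces g i.succ j.succ = g ⟨(i, j), hij⟩ := by
  simp [extendFaces, hij]

end ConeFaces

/-- The map sending an `n`-simplex of the nerve of a crossed module `(H, V, ε, α)` to
`((h_{0i})_{1 ≤ i ≤ n}, (v_{0ij})_{1 ≤ i < j ≤ n}) ∈ H^n × V^{n(n-1)/2}` is a bijection. -/
theorem nerve_simplex_bijection {H V : Type*} [Group H] [Group V]
    (ε : V →* H) (α : H →* MulAut V)
    (hεα : ∀ (h : H) (v : V), ε (α h v) = h * ε v * h⁻¹)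
    (hαε : ∀ v v' : V, α (ε v) v' = v * v' * v⁻¹)
    (n : ℕ) :
    Function.Bijective
      (fun p : {q : ({ij : Fin (n + 1) × Fin (n + 1) // ij.1 ≤ ij.2} → H)
            × ({t : Fin (n + 1) × Fin (n + 1) × Fin (n + 1) //
                  t.1 ≤ t.2.1 ∧ t.2.1 ≤ t.2.2} → V) // IsNerveSimplex ε α n q} =>
        ((fun i : Fin n => p.1.1 ⟨(0, i.succ), Fin.zero_le _⟩,
          fun st : {st : Fin n × Fin n // st.1 < st.2} =>
            p.1.2 ⟨(0, st.1.1.succ, st.1.2.succ),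
              ⟨Fin.zero_le _, Fin.succ_le_succ_iff.mpr st.2.le⟩⟩) :
          (Fin n → H) × ({st : Fin n × Fin n // st.1 < st.2} → V))) := by
  refine ⟨fun p p' hpp' => ?_, fun ⟨f, g⟩ => ?_⟩
  · obtain ⟨hedge, hface⟩ := Prod.ext_iff.mp hpp'
    exact Subtype.ext <| p.2.ext_zero p'.2 (congrFun hedge)
      fun i j hij => congrFun hface ⟨(i, j), hij⟩
  · refine ⟨⟨coneSimplex ε α (Fin.cons 1 f) (extendFaces g),
      isNerveSimplex_coneSimplex hεα hαε _ (extendFaces_self g)⟩, Prod.ext ?_ ?_⟩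
    · funext i
      exact coneSimplex_edge_zero (α := α) rfl (extendFaces_zero g) i.succ
    · funext ⟨(i, j), hij⟩
      have hij' : i.succ ≤ j.succ := Fin.succ_le_succ_iff.mpr hij.le
      exact (coneSimplex_face_zero (ε := ε) rfl (extendFaces_zero g) hij').trans
        (extendFaces_succ_succ g hij)
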